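/- arXiv:1305.2043 — 2 statements merged into one kernel-verified Lean document; each statement's English description precedes it below -/
import Mathlib

section
/- Let d ≥ 1, α ∈ (0,2), T > 0, and let Ψ̃_T(u) = ∫_{|r| ≤ T^{−1/α}} (1 − cos(⟨u,r⟩)) |r|^{−(d+α)} dr. Then for every integer m ≥ 0 the integral ∫_{ℝ^d} |u|^m e^{−Ψ̃_T(u)} du is finite. -/
open MeasureTheory Metric
open scoped RealInnerProductSpace ENNReal


lemma aux_integrable {d : ℕ} (hd : 1 ≤ d) {α : ℝ} (hα : 0 < α) (hα2 : α < 2) {R : ℝ}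
    (hR : 0 < R) (u : EuclideanSpace ℝ (Fin d)) :
    IntegrableOn (fun r : EuclideanSpace ℝ (Fin d) =>
      (1 - Real.cos ⟪u, r⟫) / ‖r‖ ^ ((d : ℝ) + α)) (closedBall 0 R) := by
  have : Nonempty (Fin d) := ⟨⟨0, hd⟩⟩
  have hb : IntegrableOn (fun r : EuclideanSpace ℝ (Fin d) =>
      ‖r‖ ^ (2 - (d : ℝ) - α)) (ball 0 (R + 1)) := by
    rw [integrableOn_fun_norm_addHaar volume (f := fun y : ℝ => y ^ (2 - (d : ℝ) - α))]
    have h := (intervalIntegral.integrableOn_Ioo_rpow_iff (s := 1 - α) (t := R + 1)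
      (by linarith)).2 (by linarith)
    refine h.congr_fun (fun y hy => ?_) measurableSet_Ioo
    have hy0 : 0 < y := hy.1
    simp only [finrank_euclideanSpace, Fintype.card_fin, smul_eq_mul]
    rw [← Real.rpow_natCast, ← Real.rpow_add hy0, Nat.cast_sub hd]
    congr 1
    push_cast
    ring
  have hb2 := (hb.mono_set (closedBall_subset_ball (by linarith : R < R + 1))).const_mul
    (‖u‖ ^ 2 / 2)
  refine Integrable.mono' hb2 (Measurable.aestronglyMeasurable (by fun_prop)) ?_
  refine Filter.Eventually.of_forall fun r => ?_
  have h0 : 0 ≤ 1 - Real.cos ⟪u, r⟫ := by linarith [Real.cos_le_one ⟪u, r⟫]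
  rw [Real.norm_of_nonneg (by positivity)]
  rcases eq_or_ne r 0 with rfl | hr
  · simp
    positivity
  have hr0 : 0 < ‖r‖ := norm_pos_iff.2 hr
  have h1 : 1 - Real.cos ⟪u, r⟫ ≤ ‖u‖ ^ 2 / 2 * ‖r‖ ^ 2 := by
    have h2 := Real.one_sub_sq_div_two_le_cos (x := ⟪u, r⟫)
    have h3 : ⟪u, r⟫ ^ 2 ≤ (‖u‖ * ‖r‖) ^ 2 := sq_le_sq.2 (by
      rw [abs_of_nonneg (by positivity : 0 ≤ ‖u‖ * ‖r‖)]
      exact abs_real_inner_le_norm u r)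
    nlinarith
  rw [div_le_iff₀ (by positivity), mul_assoc, ← Real.rpow_add hr0]
  rw [show 2 - (d : ℝ) - α + (d + α) = (2 : ℕ) by push_cast; ring, Real.rpow_natCast]
  exact h1

lemma aux_nonneg {d : ℕ} {α R : ℝ} (u : EuclideanSpace ℝ (Fin d)) :
    0 ≤ ∫ r in closedBall (0 : EuclideanSpace ℝ (Fin d)) R,
      (1 - Real.cos ⟪u, r⟫) / ‖r‖ ^ ((d : ℝ) + α) := by
  refine integral_nonneg fun r => ?_
  have h0 : 0 ≤ 1 - Real.cos ⟪u, r⟫ := by linarith [Real.cos_le_one ⟪u, r⟫]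
  positivity

lemma aux_lower {d : ℕ} (hd : 1 ≤ d) {α : ℝ} (hα : 0 < α) (hα2 : α < 2) {R : ℝ}
    (hR : 0 < R) : ∃ c : ℝ, 0 < c ∧ ∀ u : EuclideanSpace ℝ (Fin d), 1 / R ≤ ‖u‖ →
    c * ‖u‖ ^ α ≤ ∫ r in closedBall (0 : EuclideanSpace ℝ (Fin d)) R,
      (1 - Real.cos ⟪u, r⟫) / ‖r‖ ^ ((d : ℝ) + α) := by
  set V : ℝ := (volume : Measure (EuclideanSpace ℝ (Fin d))).real (ball 0 1) with hV
  have hVpos : 0 < V := by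
    rw [hV, measureReal_def]
    exact ENNReal.toReal_pos (measure_ball_pos _ _ one_pos).ne' measure_ball_lt_top.ne
  have hκ : 0 < 1 - Real.cos (1 / 4) := by
    have := Real.cos_lt_cos_of_nonneg_of_le_pi (x := 0) (y := 1 / 4) le_rfl
      (by linarith [Real.pi_gt_three]) (by norm_num)
    rw [Real.cos_zero] at this
    linarith
  refine ⟨(1 - Real.cos (1 / 4)) * (1 / 4) ^ d * V, by positivity, fun u hu => ?_⟩
  have hu0 : 0 < ‖u‖ := lt_of_lt_of_le (by positivity) hu
  have huR : 1 / ‖u‖ ≤ R := by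
    rw [div_le_iff₀ hu0]
    rwa [div_le_iff₀ hR, mul_comm] at hu
  set a : EuclideanSpace ℝ (Fin d) := (1 / (2 * ‖u‖ ^ 2)) • u with ha
  have hna : ‖a‖ = 1 / (2 * ‖u‖) := by
    rw [ha, norm_smul, Real.norm_of_nonneg (by positivity)]
    field_simp
  have hia : ⟪u, a⟫ = 1 / 2 := by
    rw [ha, inner_smul_right, real_inner_self_eq_norm_sq]
    field_simp
  have hmem : ∀ r ∈ closedBall a (1 / (4 * ‖u‖)), ‖r‖ ≤ 1 / ‖u‖ ∧
      1 / 4 ≤ ⟪u, r⟫ ∧ ⟪u, r⟫ ≤ 3 / 4 := by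
    intro r hr
    rw [mem_closedBall, dist_eq_norm] at hr
    have h1 : ‖r‖ ≤ ‖r - a‖ + ‖a‖ := by simpa using norm_add_le (r - a) a
    have h2 : ⟪u, r⟫ = ⟪u, r - a⟫ + 1 / 2 := by rw [inner_sub_right, hia]; ring
    have h3 := abs_real_inner_le_norm u (r - a)
    have h4 : ‖u‖ * ‖r - a‖ ≤ 1 / 4 := by
      calc ‖u‖ * ‖r - a‖ ≤ ‖u‖ * (1 / (4 * ‖u‖)) := by gcongr
        _ = 1 / 4 := by field_simp
    have h5 := abs_le.1 (h3.trans h4)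
    refine ⟨?_, by linarith [h5.1], by linarith [h5.2]⟩
    have h6 : 1 / (4 * ‖u‖) + 1 / (2 * ‖u‖) = (3 / 4) * (1 / ‖u‖) := by field_simp; norm_num
    have h7 : 0 < 1 / ‖u‖ := by positivity
    linarith
  have hsub : closedBall a (1 / (4 * ‖u‖)) ⊆ closedBall 0 R := fun r hr => by
    rw [mem_closedBall_zero_iff]
    exact (hmem r hr).1.trans huR
  have hint := aux_integrable hd hα hα2 hR u
  have hge := setIntegral_ge_of_const_le_real (μ := volume)
    (c := (1 - Real.cos (1 / 4)) * ‖u‖ ^ ((d : ℝ) + α))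
    (f := fun r : EuclideanSpace ℝ (Fin d) => (1 - Real.cos ⟪u, r⟫) / ‖r‖ ^ ((d : ℝ) + α))
    (s := closedBall a (1 / (4 * ‖u‖))) measurableSet_closedBall measure_closedBall_lt_top.ne
    (fun r hr => by
      obtain ⟨h1, h2, h3⟩ := hmem r hr
      have hr0 : 0 < ‖r‖ := by
        rw [norm_pos_iff]
        rintro rfl
        rw [inner_zero_right] at h2
        norm_num at h2
      have hc : Real.cos ⟪u, r⟫ ≤ Real.cos (1 / 4) :=
        Real.cos_le_cos_of_nonneg_of_le_pi (by norm_num) (by linarith [Real.pi_gt_three]) h2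
      rw [le_div_iff₀ (by positivity), mul_assoc, ← Real.mul_rpow hu0.le hr0.le]
      have h4 : (‖u‖ * ‖r‖) ^ ((d : ℝ) + α) ≤ 1 := by
        refine Real.rpow_le_one (by positivity) ?_ (by positivity)
        rw [le_div_iff₀ hu0] at h1
        linarith
      nlinarith)
    (hint.mono_set hsub)
  have hmono := setIntegral_mono_set hint (Filter.Eventually.of_forall fun r => by
      have h0 : 0 ≤ 1 - Real.cos ⟪u, r⟫ := by linarith [Real.cos_le_one ⟪u, r⟫]
      simp only [Pi.zero_apply]
      positivity) hsub.eventuallyLE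
  refine le_trans (le_of_eq ?_) (hge.trans hmono)
  rw [Measure.addHaar_real_closedBall _ _ (by positivity), finrank_euclideanSpace,
    Fintype.card_fin, Real.rpow_add hu0, Real.rpow_natCast, ← hV]
  field_simp
  rw [← mul_pow]
  congr 1
  field_simp

/-- All polynomial moments against `e^{-Ψ̃_T}` are finite. -/
theorem stmt_2 (d : ℕ) (hd : 1 ≤ d) (α : ℝ) (hα : 0 < α) (hα2 : α < 2)
    (T : ℝ) (hT : 0 < T)
    (Ψt : EuclideanSpace ℝ (Fin d) → ℝ)
    (hΨt : ∀ u, Ψt u =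
      ∫ r in Metric.closedBall (0 : EuclideanSpace ℝ (Fin d)) (T ^ (-(1 / α))),
        (1 - Real.cos ⟪u, r⟫) / ‖r‖ ^ ((d : ℝ) + α)) :
    ∀ m : ℕ,
      ∫⁻ u : EuclideanSpace ℝ (Fin d),
        ENNReal.ofReal (‖u‖ ^ m * Real.exp (-Ψt u)) < ⊤ := by
  intro m
  have : Nonempty (Fin d) := ⟨⟨0, hd⟩⟩
  set R : ℝ := T ^ (-(1 / α)) with hRdef
  have hR : 0 < R := Real.rpow_pos_of_pos hT _
  obtain ⟨c, hc, hlow⟩ := aux_lower hd hα hα2 hR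
  have hbound : ∀ u, c * ‖u‖ ^ α - c * (1 / R) ^ α ≤ Ψt u := by
    intro u
    rw [hΨt u]
    rcases le_total (1 / R) ‖u‖ with h | h
    · have h1 := hlow u h
      have h2 : 0 ≤ c * (1 / R) ^ α := by positivity
      linarith
    · have h1 := aux_nonneg (α := α) (R := R) u
      have h2 : c * ‖u‖ ^ α ≤ c * (1 / R) ^ α := by gcongr
      linarith
  have hI : Integrable (fun u : EuclideanSpace ℝ (Fin d) =>
      ‖u‖ ^ m * Real.exp (-c * ‖u‖ ^ α)) := by
    rw [integrable_fun_norm_addHaar volume (f := fun y : ℝ => y ^ m * Real.exp (-c * y ^ α))]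
    have h := integrableOn_rpow_mul_exp_neg_mul_rpow (p := α) (s := ((d - 1 + m : ℕ) : ℝ))
      (b := c) (by linarith [Nat.cast_nonneg (α := ℝ) (d - 1 + m)]) hα hc
    refine h.congr_fun (fun y hy => ?_) measurableSet_Ioi
    simp only [finrank_euclideanSpace, Fintype.card_fin, smul_eq_mul, Real.rpow_natCast]
    rw [pow_add]
    ring
  have hI2 := (hI.const_mul (Real.exp (c * (1 / R) ^ α))).lintegral_lt_top
  refine lt_of_le_of_lt (lintegral_mono fun u => ENNReal.ofReal_le_ofReal ?_) hI2
  calc ‖u‖ ^ m * Real.exp (-Ψt u)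
      ≤ ‖u‖ ^ m * Real.exp (c * (1 / R) ^ α + -c * ‖u‖ ^ α) := by
        gcongr
        linarith [hbound u]
    _ = _ := by rw [Real.exp_add]; ring
end

section
/- Let d ≥ 1, α ∈ (1,2), and let Ψ(u) = ∫_{|y|≤1} (1 − cos(⟨u,y⟩)) |y|^{−(d+α)} dy for u ∈ ℝ^d. Then Ψ is continuously differentiable on ℝ^d with ∂Ψ/∂u_j (u) = ∫_{|y|≤1} y_j sin(⟨u,y⟩) |y|^{−(d+α)} dy for each j = 1,…,d, and there exists a constant M < ∞ (depending only on d and α) such that |∂Ψ/∂u_j (u)| ≤ M |u|^{α−1} for all u ∈ ℝ^d and all j. -/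
open MeasureTheory Metric
open scoped RealInnerProductSpace

lemma aux_int (d : ℕ) (hd : 1 ≤ d) (α : ℝ) (hα1 : 1 < α) (hα2 : α < 2) :
    Integrable (fun y : EuclideanSpace ℝ (Fin d) => min 1 ‖y‖ * (‖y‖ / ‖y‖ ^ ((d : ℝ) + α))) := by
  have : Nonempty (Fin d) := ⟨⟨0, hd⟩⟩
  have : Nontrivial (EuclideanSpace ℝ (Fin d)) := by
    apply Module.nontrivial_of_finrank_pos (R := ℝ)
    rw [finrank_euclideanSpace_fin]; omega
  have key := integrable_fun_norm_addHaar (E := EuclideanSpace ℝ (Fin d)) volume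
    (f := fun r : ℝ => min 1 r * (r / r ^ ((d : ℝ) + α)))
  rw [key]
  have heq : ∀ r : ℝ, 0 < r →
      r ^ (Module.finrank ℝ (EuclideanSpace ℝ (Fin d)) - 1) • (min 1 r * (r / r ^ ((d : ℝ) + α)))
        = min 1 r * r ^ (-α) := by
    intro r hr
    rw [finrank_euclideanSpace_fin, smul_eq_mul, Real.rpow_add hr, Real.rpow_natCast,
      Real.rpow_neg hr.le]
    obtain ⟨n, rfl⟩ : ∃ n, d = n + 1 := ⟨d - 1, by omega⟩
    have h1 : r ^ α ≠ 0 := (Real.rpow_pos_of_pos hr α).ne'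
    simp only [Nat.add_sub_cancel]
    field_simp
    rw [pow_succ]
  refine IntegrableOn.congr_fun (f := fun r => min 1 r * r ^ (-α)) ?_
    (fun r hr => (heq r hr).symm) measurableSet_Ioi
  rw [← Set.Ioc_union_Ioi_eq_Ioi (zero_le_one (α := ℝ)), integrableOn_union]
  constructor
  · have : IntegrableOn (fun r : ℝ => r ^ (1 - α)) (Set.Ioc 0 1) := by
      rw [← intervalIntegrable_iff_integrableOn_Ioc_of_le zero_le_one]
      exact intervalIntegral.intervalIntegrable_rpow' (by linarith)
    refine this.congr_fun (fun r hr => ?_) measurableSet_Ioc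
    simp only [min_eq_right hr.2]
    rw [sub_eq_add_neg, Real.rpow_add hr.1, Real.rpow_one]
  · refine (integrableOn_Ioi_rpow_of_lt (a := -α) (by linarith) zero_lt_one).congr_fun
      (fun r hr => ?_) measurableSet_Ioi
    simp only [min_eq_left (le_of_lt (Set.mem_Ioi.1 hr)), one_mul]

lemma aux_min (c r : ℝ) (hc : 1 ≤ c) (a : ℝ) (hac : a ≤ c) (hr : 0 ≤ r) :
    min 1 (a * r) ≤ c * min 1 r := by
  rcases le_total 1 r with h | h
  · rw [min_eq_left h]; exact (min_le_left _ _).trans (by linarith)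
  · rw [min_eq_right h]
    exact (min_le_right _ _).trans (mul_le_mul_of_nonneg_right hac hr)

lemma aux_sin {E : Type*} [NormedAddCommGroup E] [InnerProductSpace ℝ E] (u y : E) :
    |Real.sin ⟪u, y⟫| ≤ min 1 (‖u‖ * ‖y‖) :=
  le_min (Real.abs_sin_le_one _) (Real.abs_sin_le_abs.trans (abs_real_inner_le_norm u y))

lemma aux_scale (d : ℕ) (α : ℝ)
    (u : EuclideanSpace ℝ (Fin d)) (hu : u ≠ 0) :
    ∫ y : EuclideanSpace ℝ (Fin d), min 1 (‖u‖ * ‖y‖) * (‖y‖ / ‖y‖ ^ ((d : ℝ) + α)) =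
    (∫ y : EuclideanSpace ℝ (Fin d), min 1 ‖y‖ * (‖y‖ / ‖y‖ ^ ((d : ℝ) + α))) * ‖u‖ ^ (α - 1) := by
  have hu' : 0 < ‖u‖ := norm_pos_iff.2 hu
  have h := Measure.integral_comp_smul (volume : Measure (EuclideanSpace ℝ (Fin d)))
    (fun y => min 1 ‖y‖ * (‖y‖ / ‖y‖ ^ ((d : ℝ) + α))) ‖u‖
  have h2 : ∀ y : EuclideanSpace ℝ (Fin d), min 1 (‖u‖ * ‖y‖) * (‖y‖ / ‖y‖ ^ ((d : ℝ) + α)) =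
     ‖u‖ ^ ((d : ℝ) + α - 1) *
      (min 1 ‖‖u‖ • y‖ * (‖‖u‖ • y‖ / ‖‖u‖ • y‖ ^ ((d : ℝ) + α))) := by
    intro y
    rw [norm_smul, norm_norm, Real.mul_rpow hu'.le (norm_nonneg y), Real.rpow_sub hu',
      Real.rpow_one]
    have : ‖u‖ ^ ((d : ℝ) + α) ≠ 0 := (Real.rpow_pos_of_pos hu' _).ne'
    field_simp
  simp_rw [h2]
  rw [integral_const_mul, h, finrank_euclideanSpace_fin, smul_eq_mul,
    abs_of_pos (by positivity), add_sub_assoc, Real.rpow_add hu', Real.rpow_natCast]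
  field_simp

theorem stmt_3 (d : ℕ) (hd : 1 ≤ d) (α : ℝ) (hα1 : 1 < α) (hα2 : α < 2)
    (Ψ : EuclideanSpace ℝ (Fin d) → ℝ)
    (hΨ : ∀ u, Ψ u =
      ∫ y in Metric.closedBall (0 : EuclideanSpace ℝ (Fin d)) 1,
        (1 - Real.cos ⟪u, y⟫) / ‖y‖ ^ ((d : ℝ) + α)) :
    ContDiff ℝ 1 Ψ ∧
    (∀ (u : EuclideanSpace ℝ (Fin d)) (j : Fin d),
      fderiv ℝ Ψ u (EuclideanSpace.single j 1) =
        ∫ y in Metric.closedBall (0 : EuclideanSpace ℝ (Fin d)) 1,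
          (y j) * Real.sin ⟪u, y⟫ / ‖y‖ ^ ((d : ℝ) + α)) ∧
    ∃ M : ℝ, ∀ (u : EuclideanSpace ℝ (Fin d)) (j : Fin d),
      |fderiv ℝ Ψ u (EuclideanSpace.single j 1)| ≤ M * ‖u‖ ^ (α - 1) := by
  have hg := aux_int d hd α hα1 hα2
  set g : EuclideanSpace ℝ (Fin d) → ℝ :=
    fun y => min 1 ‖y‖ * (‖y‖ / ‖y‖ ^ ((d : ℝ) + α)) with hgdef
  set μ := (volume : Measure (EuclideanSpace ℝ (Fin d))).restrict (closedBall 0 1) with hμ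
  have hgμ : Integrable g μ := hg.mono_measure Measure.restrict_le_self
  let F' : EuclideanSpace ℝ (Fin d) → EuclideanSpace ℝ (Fin d) →
      (EuclideanSpace ℝ (Fin d) →L[ℝ] ℝ) :=
    fun u y => (Real.sin ⟪u, y⟫ / ‖y‖ ^ ((d : ℝ) + α)) • innerSL ℝ y
  have hP : ∀ y : EuclideanSpace ℝ (Fin d), 0 ≤ ‖y‖ ^ ((d : ℝ) + α) :=
    fun y => Real.rpow_nonneg (norm_nonneg y) _
  have hF'n : ∀ u y, ‖F' u y‖ ≤ min 1 (‖u‖ * ‖y‖) * (‖y‖ / ‖y‖ ^ ((d : ℝ) + α)) := by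
    intro u y
    simp only [F', norm_smul, innerSL_apply_norm, Real.norm_eq_abs, abs_div, abs_of_nonneg (hP y)]
    rw [div_mul_eq_mul_div, mul_div_assoc]
    exact mul_le_mul_of_nonneg_right (aux_sin u y) (div_nonneg (norm_nonneg y) (hP y))
  have hF'g : ∀ (C : ℝ) (u y), 1 ≤ C → ‖u‖ ≤ C → ‖F' u y‖ ≤ C * g y := by
    intro C u y h1 h2
    refine (hF'n u y).trans ?_
    rw [hgdef, ← mul_assoc]
    exact mul_le_mul_of_nonneg_right (aux_min C ‖y‖ h1 _ h2 (norm_nonneg y))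
      (div_nonneg (norm_nonneg y) (hP y))
  have hF'm : ∀ u, AEStronglyMeasurable (F' u) μ := by
    intro u
    apply Measurable.aestronglyMeasurable
    refine Measurable.smul (f := fun y : EuclideanSpace ℝ (Fin d) =>
      Real.sin ⟪u, y⟫ / ‖y‖ ^ ((d : ℝ) + α)) (g := fun y => innerSL ℝ y) ?_ ?_
    · fun_prop
    · exact (innerSL ℝ).continuous.measurable
  have hFm : ∀ u : EuclideanSpace ℝ (Fin d), AEStronglyMeasurable
      (fun y => (1 - Real.cos ⟪u, y⟫) / ‖y‖ ^ ((d : ℝ) + α)) μ := by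
    intro u
    apply Measurable.aestronglyMeasurable
    fun_prop
  have hF'i : ∀ u, Integrable (F' u) μ := by
    intro u
    refine (hgμ.const_mul (‖u‖ + 1)).mono' (hF'm u) (Filter.Eventually.of_forall fun y => ?_)
    exact hF'g _ u y (by linarith [norm_nonneg u]) (by linarith)
  have hFi : ∀ u : EuclideanSpace ℝ (Fin d), Integrable
      (fun y => (1 - Real.cos ⟪u, y⟫) / ‖y‖ ^ ((d : ℝ) + α)) μ := by
    intro u
    refine (hgμ.const_mul (‖u‖ ^ 2)).mono' (hFm u) ?_
    rw [hμ]
    filter_upwards [ae_restrict_mem measurableSet_closedBall] with y hy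
    have hy1 : ‖y‖ ≤ 1 := by simpa using hy
    simp only [hgdef, min_eq_right hy1]
    rw [Real.norm_eq_abs, abs_div, abs_of_nonneg (hP y), ← mul_assoc, ← mul_div_assoc]
    apply div_le_div_of_nonneg_right _ (hP y)
    rw [abs_of_nonneg (by linarith [Real.cos_le_one ⟪u, y⟫])]
    have h1 := Real.one_sub_sq_div_two_le_cos (x := ⟪u, y⟫)
    have h2 : ⟪u, y⟫ ^ 2 ≤ (‖u‖ * ‖y‖) ^ 2 := sq_le_sq' 
      (neg_le_of_abs_le (abs_real_inner_le_norm u y)) (le_of_abs_le (abs_real_inner_le_norm u y))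
    nlinarith [sq_nonneg (‖u‖ * ‖y‖)]
  have hder : ∀ u, HasFDerivAt Ψ (∫ y, F' u y ∂μ) u := by
    intro u
    rw [show Ψ = _ from funext hΨ]
    refine hasFDerivAt_integral_of_dominated_of_fderiv_le (F' := F')
      (bound := fun y => (‖u‖ + 1) * g y)
      (ball_mem_nhds u zero_lt_one) (Filter.Eventually.of_forall hFm) (hFi u) (hF'm u)
      (Filter.Eventually.of_forall fun y x hx => ?_) (hgμ.const_mul _)
      (Filter.Eventually.of_forall fun y x hx => ?_)
    · apply hF'g _ x y (by linarith [norm_nonneg u])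
      have h1 : ‖x - u‖ < 1 := by simpa [dist_eq_norm] using hx
      have h2 := norm_add_le (x - u) u
      rw [sub_add_cancel] at h2
      linarith
    · have h0 : HasFDerivAt (fun x : EuclideanSpace ℝ (Fin d) => ⟪x, y⟫) (innerSL ℝ y) x := by
        simpa [real_inner_comm] using (innerSL ℝ y).hasFDerivAt (x := x)
      have h1 := (h0.cos.const_sub 1).mul_const ((‖y‖ ^ ((d : ℝ) + α))⁻¹)
      simp only [← div_eq_mul_inv] at h1
      have e : (‖y‖ ^ ((d : ℝ) + α))⁻¹ • -(-Real.sin ⟪x, y⟫ • innerSL ℝ y) = F' x y := by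
        simp only [F', neg_smul, neg_neg, smul_smul, div_eq_mul_inv]
        rw [mul_comm]
      exact h1.congr_fderiv e
  have hfd : ∀ u, fderiv ℝ Ψ u = ∫ y, F' u y ∂μ := fun u => (hder u).fderiv
  have hpart : ∀ (u : EuclideanSpace ℝ (Fin d)) (j : Fin d),
      fderiv ℝ Ψ u (EuclideanSpace.single j 1) =
        ∫ y, (y j) * Real.sin ⟪u, y⟫ / ‖y‖ ^ ((d : ℝ) + α) ∂μ := by
    intro u j
    rw [hfd, ContinuousLinearMap.integral_apply (hF'i u)]
    congr 1
    ext y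
    simp [F', EuclideanSpace.inner_single_right]
    ring
  refine ⟨?_, hpart, ∫ y, g y, ?_⟩
  · rw [contDiff_one_iff_fderiv]
    refine ⟨fun u => (hder u).differentiableAt, ?_⟩
    rw [show fderiv ℝ Ψ = _ from funext hfd, continuous_iff_continuousAt]
    intro u
    refine continuousAt_of_dominated (bound := fun y => (‖u‖ + 1) * g y)
      (Filter.Eventually.of_forall hF'm) ?_ (hgμ.const_mul _)
      (Filter.Eventually.of_forall fun y => ?_)
    · filter_upwards [ball_mem_nhds u zero_lt_one] with x hx
      refine Filter.Eventually.of_forall fun y => ?_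
      apply hF'g _ x y (by linarith [norm_nonneg u])
      have h1 : ‖x - u‖ < 1 := by simpa [dist_eq_norm] using hx
      have h2 := norm_add_le (x - u) u
      rw [sub_add_cancel] at h2
      linarith
    · apply Continuous.continuousAt
      simp only [F', div_eq_mul_inv]
      fun_prop
  · intro u j
    by_cases hu : u = 0
    · subst hu
      rw [hpart]
      simp [Real.zero_rpow (by linarith : α - 1 ≠ 0)]
    · have hi : Integrable (fun y : EuclideanSpace ℝ (Fin d) =>
          min 1 (‖u‖ * ‖y‖) * (‖y‖ / ‖y‖ ^ ((d : ℝ) + α))) := by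
        refine (hg.const_mul (‖u‖ + 1)).mono' (Measurable.aestronglyMeasurable (by fun_prop))
          (Filter.Eventually.of_forall fun y => ?_)
        have h3 := div_nonneg (norm_nonneg y) (hP y)
        rw [Real.norm_eq_abs, abs_of_nonneg (by positivity), hgdef, ← mul_assoc]
        exact mul_le_mul_of_nonneg_right (aux_min _ ‖y‖ (by linarith [norm_nonneg u]) _
          (by linarith) (norm_nonneg y)) h3
      rw [← Real.norm_eq_abs]
      calc ‖fderiv ℝ Ψ u (EuclideanSpace.single j 1)‖ 
          ≤ ‖fderiv ℝ Ψ u‖ * ‖(EuclideanSpace.single j 1 : EuclideanSpace ℝ (Fin d))‖ :=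
            ContinuousLinearMap.le_opNorm _ _
        _ = ‖∫ y, F' u y ∂μ‖ := by rw [hfd]; simp
        _ ≤ ∫ y, min 1 (‖u‖ * ‖y‖) * (‖y‖ / ‖y‖ ^ ((d : ℝ) + α)) ∂μ :=
            norm_integral_le_of_norm_le (hi.mono_measure Measure.restrict_le_self)
              (Filter.Eventually.of_forall fun y => hF'n u y)
        _ ≤ ∫ y : EuclideanSpace ℝ (Fin d), 
              min 1 (‖u‖ * ‖y‖) * (‖y‖ / ‖y‖ ^ ((d : ℝ) + α)) := by
            refine setIntegral_le_integral hi (Filter.Eventually.of_forall fun y => ?_)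
            have h3 := div_nonneg (norm_nonneg y) (hP y)
            simp only [Pi.zero_apply]
            positivity
        _ = _ := aux_scale d α u hu
end
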